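/- arXiv:1401.6992 — 2 statements merged into one kernel-verified Lean document; each statement's English description precedes it below -/
import Mathlib

section
/- Let d ≥ 2. There exist constants C > 1 and 0 < c < 1, depending only on d, such that for every odd prime power q and all E, F ⊆ F_q^d with |E||F| ≥ C q^{d+1}, there exists a subset E₀ ⊆ E with |E₀| ≥ c q^{−1}|E| such that |Π(E₀,F)| ≥ c q. -/
/-!
One may take `E₀ = E`, because the hypothesis already forces every nonzero `t` to be a dot product.
Let `E' = E \ {0}`, fix `t ≠ 0` and let `n(y)` be the number of `x ∈ E'` with `x · y = t`. Over all
`y`, the mean of `n` is `|E'| / q`. The second moment counts common points of pairs of hyperplanes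
`x · y = t`, `x' · y = t`: each hyperplane has `q^(d-1)` points, and two distinct ones share at most
`q^(d-2)` (parallel ones are disjoint since `t ≠ 0`), so `∑ (q n(y) - |E'|)² ≤ |E'| q^(d+1)`
(`variance_bound`).
If `t` were not attained on `E' × F`, then `n` would vanish on `F`, giving
`|F| |E'|² ≤ |E'| q^(d+1)`, contrary to `|E| |F| ≥ 3 q^(d+1)`.
-/

open Finset

noncomputable section

/-- dot product on `Fin d → K` -/
def fqDot {K : Type} [Field K] {d : ℕ} (x y : Fin d → K) : K := ∑ i, x i * y i

/-- dot product set Π(E,F) -/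
def dotSet {K : Type} [Field K] [DecidableEq K] {d : ℕ}
    (E F : Finset (Fin d → K)) : Finset K :=
  (E ×ˢ F).image fun p => fqDot p.1 p.2

/-- punctured line through the origin and x -/
def lineThrough {K : Type} [Field K] [Fintype K] [DecidableEq K] {d : ℕ}
    (x : Fin d → K) : Finset (Fin d → K) :=
  univ.filter fun y => ∃ s : K, s ≠ 0 ∧ y = s • x

/-- Fourier transform of the indicator of F -/
def ftransform {K : Type} [Field K] [Fintype K] {d : ℕ}
    (ψ : AddChar K ℂ) (F : Finset (Fin d → K)) (m : Fin d → K) : ℂ :=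
  ((Fintype.card K : ℂ) ^ d)⁻¹ * ∑ x ∈ F, ψ (-(fqDot x m))

/-- the quantity 𝔅(E,F) -/
def Bquant {K : Type} [Field K] [Fintype K] [DecidableEq K] {d : ℕ}
    (ψ : AddChar K ℂ) (E F : Finset (Fin d → K)) : ℝ :=
  ∑ x ∈ univ.filter (fun x : Fin d → K => x ≠ 0),
    ((E ∩ lineThrough x).card : ℝ) * ‖ftransform ψ F x‖ ^ 2

lemma fqDot_add {K : Type} [Field K] {d : ℕ} (x y z : Fin d → K) :
    fqDot x (y + z) = fqDot x y + fqDot x z := by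
  simp [fqDot, mul_add, Finset.sum_add_distrib]

lemma fqDot_smul {K : Type} [Field K] {d : ℕ} (x y : Fin d → K) (s : K) :
    fqDot x (s • y) = s * fqDot x y := by
  simp only [fqDot, Pi.smul_apply, smul_eq_mul, Finset.mul_sum]
  exact Finset.sum_congr rfl fun i _ => by ring

lemma fqDot_single {K : Type} [Field K] {d : ℕ} (x : Fin d → K) (i : Fin d) (a : K) :
    fqDot x (Pi.single i a) = x i * a := by
  simp [fqDot, Pi.single_apply]

lemma card_hyperplane {K : Type} [Field K] [Fintype K] [DecidableEq K] {d : ℕ}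
    (x : Fin d → K) (hx : x ≠ 0) (t : K) :
    (univ.filter fun y => fqDot x y = t).card * Fintype.card K = Fintype.card K ^ d := by
  obtain ⟨i, hi⟩ := Function.ne_iff.mp hx
  simp only [Pi.zero_apply] at hi
  have hv : fqDot x (Pi.single i (x i)⁻¹) = 1 := by
    rw [fqDot_single, mul_inv_cancel₀ hi]
  set v : Fin d → K := Pi.single i (x i)⁻¹
  have h : ((univ.filter fun y => fqDot x y = t) ×ˢ (univ : Finset K)).card
      = (univ : Finset (Fin d → K)).card := by
    -- translation along `v` sweeps the hyperplane over the whole space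
    apply Finset.card_bij (fun p _ => p.1 + p.2 • v)
    · simp
    · rintro ⟨y, s⟩ h1 ⟨y', s'⟩ h2 h
      simp only [mem_product, mem_filter, mem_univ, true_and, and_true] at h1 h2 h
      have h3 := congrArg (fqDot x) h
      simp only [fqDot_add, fqDot_smul, hv, h1, h2, mul_one, add_right_inj] at h3
      subst h3
      simpa using h
    · intro z _
      refine ⟨(z + (t - fqDot x z) • v, -(t - fqDot x z)), ?_, ?_⟩
      · simp [fqDot_add, fqDot_smul, hv]
      · simp only [neg_smul]; abel
  simpa [Finset.card_product] using h

/-- Two parallel hyperplanes at the same nonzero level are disjoint, so `x ≠ x'` is enough here. -/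
lemma card_inter_le {K : Type} [Field K] [Fintype K] [DecidableEq K] {d : ℕ}
    (x x' : Fin d → K) (hne : x ≠ x') (t : K) (ht : t ≠ 0) :
    (univ.filter fun y => fqDot x y = t ∧ fqDot x' y = t).card * Fintype.card K ^ 2
      ≤ Fintype.card K ^ d := by
  by_cases hD : ∃ i j, x i * x' j - x j * x' i ≠ 0
  · obtain ⟨i, j, hD⟩ := hD
    set D := x i * x' j - x j * x' i with hDdef
    -- `v`, `w` form a dual pair to `x`, `x'`
    obtain ⟨v, hv, hv'⟩ : ∃ v, fqDot x v = 1 ∧ fqDot x' v = 0 := by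
      refine ⟨Pi.single i (x' j / D) + Pi.single j (-x' i / D), ?_, ?_⟩
      · rw [fqDot_add, fqDot_single, fqDot_single]; field_simp; rw [hDdef]; ring
      · rw [fqDot_add, fqDot_single, fqDot_single]; field_simp; ring
    obtain ⟨w, hw, hw'⟩ : ∃ w, fqDot x w = 0 ∧ fqDot x' w = 1 := by
      refine ⟨Pi.single i (-x j / D) + Pi.single j (x i / D), ?_, ?_⟩
      · rw [fqDot_add, fqDot_single, fqDot_single]; field_simp; ring
      · rw [fqDot_add, fqDot_single, fqDot_single]; field_simp; rw [hDdef]; ring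
    have h : ((univ.filter fun y => fqDot x y = t ∧ fqDot x' y = t) ×ˢ
        (univ : Finset (K × K))).card ≤ (univ : Finset (Fin d → K)).card := by
      apply Finset.card_le_card_of_injOn (fun p => p.1 + (p.2.1 • v + p.2.2 • w))
      · simp
      · rintro ⟨y, s, r⟩ h1 ⟨y', s', r'⟩ h2 h
        simp only [coe_product, coe_filter, coe_univ, Set.mem_prod, Set.mem_ofPred_eq, mem_univ,
          true_and, Set.mem_univ, and_true] at h1 h2 h
        have h3 := congrArg (fqDot x) h
        have h4 := congrArg (fqDot x') h
        simp only [fqDot_add, fqDot_smul, hv, hw, h1.1, h2.1, mul_one, mul_zero, add_zero,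
          add_right_inj] at h3
        simp only [fqDot_add, fqDot_smul, hv', hw', h1.2, h2.2, mul_one, mul_zero, zero_add,
          add_right_inj] at h4
        subst h3 h4
        simpa using h
    simpa [Finset.card_product, sq] using h
  · push Not at hD
    rw [Finset.filter_false_of_mem]
    · simp
    · rintro y - ⟨h1, h2⟩
      apply hne
      funext i
      -- with all minors zero, `x i * t = x i * (x' · y) = x' i * (x · y) = x' i * t`
      have : x i * fqDot x' y = x' i * fqDot x y := by
        simp only [fqDot, Finset.mul_sum]
        exact Finset.sum_congr rfl fun j _ => by linear_combination y j * hD i j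
      rw [h1, h2] at this
      exact mul_right_cancel₀ ht this

lemma variance_bound {K : Type} [Field K] [Fintype K] [DecidableEq K] {d : ℕ}
    (E : Finset (Fin d → K)) (hE : ∀ x ∈ E, x ≠ 0) (t : K) (ht : t ≠ 0) :
    ∑ y : Fin d → K,
      ((Fintype.card K : ℝ) * ((E.filter fun x => fqDot x y = t).card : ℝ) - E.card) ^ 2
      ≤ (E.card : ℝ) * (Fintype.card K : ℝ) ^ (d + 1) := by
  set q : ℝ := (Fintype.card K : ℝ) with hq
  set e : ℝ := (E.card : ℝ) with he
  have hn : ∀ y, ((E.filter fun x => fqDot x y = t).card : ℝ)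
      = ∑ x ∈ E, if fqDot x y = t then (1 : ℝ) else 0 := by
    intro y; simp
  have first : q * ∑ y : Fin d → K, ((E.filter fun x => fqDot x y = t).card : ℝ)
      = e * q ^ d := by
    simp only [hn]
    rw [Finset.sum_comm, Finset.mul_sum, he, ← nsmul_eq_mul, ← Finset.sum_const]
    refine Finset.sum_congr rfl fun x hx => ?_
    have := card_hyperplane x (hE x hx) t
    rw [Finset.sum_boole, mul_comm, hq]
    exact_mod_cast this
  have second : q ^ 2 * ∑ y : Fin d → K, ((E.filter fun x => fqDot x y = t).card : ℝ) ^ 2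
      ≤ e * q ^ (d + 1) + e ^ 2 * q ^ d := by
    have h1 : ∑ y : Fin d → K, ((E.filter fun x => fqDot x y = t).card : ℝ) ^ 2
        = ∑ x ∈ E, ∑ x' ∈ E,
          ((univ.filter fun y => fqDot x y = t ∧ fqDot x' y = t).card : ℝ) := by
      simp only [hn, sq, Finset.sum_mul_sum]
      rw [Finset.sum_comm]
      refine Finset.sum_congr rfl fun x _ => ?_
      rw [Finset.sum_comm]
      refine Finset.sum_congr rfl fun x' _ => ?_
      rw [← Finset.sum_boole]
      refine Finset.sum_congr rfl fun y _ => ?_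
      split_ifs <;> simp_all
    have h2 : ∀ x ∈ E, ∀ x' ∈ E,
        q ^ 2 * ((univ.filter fun y => fqDot x y = t ∧ fqDot x' y = t).card : ℝ)
          ≤ (if x = x' then q ^ (d + 1) else 0) + q ^ d := by
      intro x hx x' _
      split_ifs with h
      · subst h
        have h3 : ((univ.filter fun y => fqDot x y = t).card : ℝ) * q = q ^ d := by
          rw [hq]; exact_mod_cast card_hyperplane x (hE x hx) t
        simp only [and_self]
        have : 0 ≤ q ^ d := by positivity
        have h4 : q ^ 2 * ((univ.filter fun y => fqDot x y = t).card : ℝ) = q ^ (d + 1) := by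
          rw [pow_succ q d, ← h3]; ring
        linarith
      · have h3 : ((univ.filter fun y => fqDot x y = t ∧ fqDot x' y = t).card : ℝ) * q ^ 2
            ≤ q ^ d := by
          rw [hq]; exact_mod_cast card_inter_le x x' h t ht
        linarith
    rw [h1, Finset.mul_sum]
    calc _ ≤ ∑ x ∈ E, ∑ x' ∈ E, ((if x = x' then q ^ (d + 1) else 0) + q ^ d) := by
          refine Finset.sum_le_sum fun x hx => ?_
          rw [Finset.mul_sum]
          exact Finset.sum_le_sum fun x' hx' => h2 x hx x' hx'
      _ = e * q ^ (d + 1) + e ^ 2 * q ^ d := by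
          simp [Finset.sum_add_distrib, ← he]
          ring
  have expand : ∑ y : Fin d → K,
      (q * ((E.filter fun x => fqDot x y = t).card : ℝ) - e) ^ 2
      = q ^ 2 * ∑ y : Fin d → K, ((E.filter fun x => fqDot x y = t).card : ℝ) ^ 2
        - 2 * e * (q * ∑ y : Fin d → K, ((E.filter fun x => fqDot x y = t).card : ℝ))
        + e ^ 2 * q ^ d := by
    have hc : e ^ 2 * q ^ d = ∑ _y : Fin d → K, e ^ 2 := by
      simp [hq, mul_comm]
    rw [hc]
    simp only [Finset.mul_sum]
    rw [← Finset.sum_sub_distrib, ← Finset.sum_add_distrib]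
    exact Finset.sum_congr rfl fun y _ => by ring
  rw [expand, first]
  linarith

lemma mem_dotSet_of_large {K : Type} [Field K] [Fintype K] [DecidableEq K] {d : ℕ}
    (E F : Finset (Fin d → K)) (hE : ∀ x ∈ E, x ≠ 0)
    (h : (Fintype.card K : ℝ) ^ (d + 1) < (E.card : ℝ) * F.card) (t : K) (ht : t ≠ 0) :
    t ∈ dotSet E F := by
  by_contra hcon
  have hzero : ∀ y ∈ F, (E.filter fun x => fqDot x y = t) = ∅ := by
    intro y hy
    refine Finset.filter_false_of_mem fun x hx hxy => hcon ?_
    exact Finset.mem_image.mpr ⟨(x, y), Finset.mem_product.mpr ⟨hx, hy⟩, hxy⟩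
  have h1 : (F.card : ℝ) * (E.card : ℝ) ^ 2 ≤ (E.card : ℝ) * (Fintype.card K : ℝ) ^ (d + 1) := by
    refine le_trans ?_ (variance_bound E hE t ht)
    calc (F.card : ℝ) * (E.card : ℝ) ^ 2
        = ∑ y ∈ F, ((Fintype.card K : ℝ) *
            ((E.filter fun x => fqDot x y = t).card : ℝ) - E.card) ^ 2 := by
          rw [← nsmul_eq_mul, ← Finset.sum_const]
          exact Finset.sum_congr rfl fun y hy => by simp [hzero y hy]
      _ ≤ _ := Finset.sum_le_sum_of_subset_of_nonneg (Finset.subset_univ F)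
          fun _ _ _ => sq_nonneg _
  have hpos : (0 : ℝ) < E.card := by
    rcases (Nat.cast_nonneg E.card : (0 : ℝ) ≤ E.card).lt_or_eq with h0 | h0
    · exact h0
    · rw [← h0, zero_mul] at h
      exact absurd h (not_lt.mpr (by positivity))
  nlinarith [mul_pos hpos (sub_pos.mpr h)]

/-- if |E||F| ≥ C q^{d+1}, then some E₀ ⊆ E with |E₀| ≥ c q^{-1}|E| has
|Π(E₀,F)| ≥ cq. -/
theorem dotSet_card_subset_general (d : ℕ) (hd : 2 ≤ d) :
    ∃ C : ℝ, 1 < C ∧ ∃ c : ℝ, 0 < c ∧ c < 1 ∧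
      ∀ (K : Type) [Field K] [Fintype K] [DecidableEq K],
        Odd (Fintype.card K) →
        ∀ E F : Finset (Fin d → K),
          ((E.card : ℝ) * (F.card : ℝ) ≥ C * (Fintype.card K : ℝ) ^ (d + 1)) →
          ∃ E₀ ⊆ E, ((E₀.card : ℝ) ≥ c * (Fintype.card K : ℝ)⁻¹ * (E.card : ℝ)) ∧
            ((dotSet E₀ F).card : ℝ) ≥ c * (Fintype.card K : ℝ) := by
  refine ⟨3, by norm_num, 1 / 2, by norm_num, by norm_num, ?_⟩
  intro K _ _ _ _ E F h
  have hq : (2 : ℝ) ≤ Fintype.card K := by exact_mod_cast Fintype.one_lt_card (α := K)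
  refine ⟨E, Finset.Subset.refl E, ?_, ?_⟩
  · have h1 : (1 / 2 : ℝ) * (Fintype.card K : ℝ)⁻¹ ≤ 1 := by
      have := inv_le_one_of_one_le₀ (show (1 : ℝ) ≤ Fintype.card K by linarith)
      linarith
    exact mul_le_of_le_one_left (Nat.cast_nonneg _) h1
  · have hF : (F.card : ℝ) ≤ (Fintype.card K : ℝ) ^ d := by
      have := Finset.card_le_univ F
      rw [Fintype.card_fun, Fintype.card_fin] at this
      exact_mod_cast this
    have hE : (E.card : ℝ) ≤ (E.erase 0).card + 1 := by
      have := Finset.pred_card_le_card_erase (s := E) (a := 0)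
      exact_mod_cast (by omega : E.card ≤ (E.erase 0).card + 1)
    -- discarding the origin costs at most `|F| ≤ q^d` pairs
    have hlarge : (Fintype.card K : ℝ) ^ (d + 1) < ((E.erase 0).card : ℝ) * F.card := by
      have hp : (0 : ℝ) < (Fintype.card K : ℝ) ^ d := by positivity
      have h2 : (E.card : ℝ) * F.card ≤ ((E.erase 0).card + 1) * F.card :=
        mul_le_mul_of_nonneg_right hE (Nat.cast_nonneg _)
      rw [pow_succ] at h ⊢
      nlinarith [mul_le_mul_of_nonneg_left hq hp.le]
    have hsub : (univ : Finset K).erase 0 ⊆ dotSet E F := by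
      intro t ht
      have h3 := mem_dotSet_of_large (E.erase 0) F
        (fun x hx => Finset.ne_of_mem_erase hx) hlarge t (Finset.ne_of_mem_erase ht)
      exact Finset.image_subset_image
        (Finset.product_subset_product_left (Finset.erase_subset 0 E)) h3
    have hc := Finset.card_le_card hsub
    rw [Finset.card_erase_of_mem (Finset.mem_univ _), Finset.card_univ] at hc
    have hc' : (Fintype.card K : ℝ) ≤ (dotSet E F).card + 1 := by
      exact_mod_cast (by omega : Fintype.card K ≤ (dotSet E F).card + 1)
    linarith
end
end

section
/- Let d ≥ 3, 0 ≤ γ ≤ 1, and c₀ > 0. There exist constants C > 1 and 0 < c < 1, depending only on d and c₀, such that for every odd prime power q the following holds: if E ⊆ P and F ⊆ F_q^d satisfy |π(F)| ≥ c₀ q^{−γ}|F| and |E||F| ≥ C q^{d+γ}, then |Π(E,F)| ≥ c q. -/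
/-!
For a finite set `G` and a vector `x`, let `coll G (x · ·)` count the pairs `(y, y') ∈ G²` with
`x·y = x·y'`. By Cauchy–Schwarz, `|G|² ≤ |x·G| · coll G (x · ·)`, so for `x ∈ E` it suffices to
bound collisions on average over `E`; their excess over the expected number is measured by
`excess G x = q · coll G (x · ·) - |G|² ≥ 0`.

Two facts about the excess are used. Summed over *all* `x ∈ K^m` it equals `q^m (q - 1) |G|`, because
a nonzero linear form vanishes on exactly `q^(m-1)` vectors (`sum_excess`); and it is invariant
under nonzero scaling of `x` (`excess_smul`).

Replace `F` by a subset `G` on which `π` is injective with `π(G) = π(F)`, and split `E` into the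
points with `x_d ≠ 0` and those with `x_d = 0`. A line through the origin meets the paraboloid in at
most one point with `x_d ≠ 0`, so the `q - 1` dilates of the first part are disjoint and its total
excess is at most `q^d |G|`. On the second part `x·y` depends on `π(y)` only, so the excess is
that of `π(G) ⊆ K^(d-1)`, with total at most `q^(d-1) (q - 1) |G|`. Hence
`q |E| |G|² ≤ |Π| (|E| |G|² + 2 q^d |G|)`, and `|E| |G| ≥ c₀ C q^d ≥ 2 q^d` yields `|Π| ≥ q / 2`.
-/

open Finset

noncomputable section

/-- the paraboloid P ⊆ F_q^{n+1} : x₁² + ⋯ + x_n² = x_{n+1} -/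
def parab {K : Type} [Field K] [Fintype K] [DecidableEq K] (n : ℕ) :
    Finset (Fin (n + 1) → K) :=
  univ.filter fun x => ∑ i : Fin n, (x i.castSucc) ^ 2 = x (Fin.last n)

/-- projection onto the first n coordinates -/
def projFirst {K : Type} (n : ℕ) (x : Fin (n + 1) → K) : Fin n → K :=
  fun i => x i.castSucc

/-- The number of ordered pairs of elements of `s` (including diagonal ones) on which `f` agrees. -/
def coll {α K : Type} [DecidableEq K] (s : Finset α) (f : α → K) : ℕ :=
  ((s ×ˢ s).filter fun p => f p.1 = f p.2).card

/-- Cauchy–Schwarz over the fibres of `f`. -/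
lemma card_sq_le_mul_coll {α K : Type} [DecidableEq K] (s : Finset α) (f : α → K)
    (T : Finset K) (hT : ∀ a ∈ s, f a ∈ T) : s.card ^ 2 ≤ T.card * coll s f := by
  have h1 : s.card = ∑ t ∈ T, (s.filter fun a => f a = t).card :=
    card_eq_sum_card_fiberwise hT
  have h2 : coll s f = ∑ t ∈ T, (s.filter fun a => f a = t).card ^ 2 := by
    unfold coll
    rw [card_eq_sum_card_fiberwise (f := fun p : α × α => f p.1) (t := T)]
    · refine sum_congr rfl fun t _ => ?_
      rw [sq, ← card_product]
      congr 1
      ext p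
      simp only [mem_filter, mem_product]
      grind
    · intro p hp
      simp only [coe_filter, mem_product, Set.mem_ofPred_eq] at hp
      exact hT _ hp.1.1
  rw [h2, h1]
  exact sq_sum_le_card_mul_sum_sq

lemma fqDot_sub_right {K : Type} [Field K] {m : ℕ} (x y z : Fin m → K) :
    fqDot x (y - z) = fqDot x y - fqDot x z := by
  simp [fqDot, mul_sub]

lemma fqDot_add_left {K : Type} [Field K] {m : ℕ} (x y z : Fin m → K) :
    fqDot (x + y) z = fqDot x z + fqDot y z := by
  simp [fqDot, add_mul, sum_add_distrib]

lemma fqDot_smul_left {K : Type} [Field K] {m : ℕ} (s : K) (x z : Fin m → K) :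
    fqDot (s • x) z = s * fqDot x z := by
  simp [fqDot, mul_sum, mul_assoc]

section
variable {K : Type} [Field K] [Fintype K] [DecidableEq K]

/-- A nonzero linear form on `K^m` vanishes at a proportion `1/q` of all vectors. -/
lemma card_orth {m : ℕ} (z : Fin m → K) (hz : z ≠ 0) :
    Fintype.card K * (univ.filter fun x : Fin m → K => fqDot x z = 0).card
      = Fintype.card K ^ m := by
  obtain ⟨i, hi⟩ := Function.ne_iff.mp hz
  have hi' : z i ≠ 0 := hi
  have hw : fqDot (Pi.single i (z i)⁻¹) z = 1 := by
    simp [fqDot, Pi.single_apply, hi']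
  set w : Fin m → K := Pi.single i (z i)⁻¹
  have hfib : ∀ t : K, (univ.filter fun x : Fin m → K => fqDot x z = t).card
      = (univ.filter fun x : Fin m → K => fqDot x z = 0).card := by
    intro t
    refine card_bij' (fun x _ => x + (-t) • w) (fun x _ => x + t • w) ?_ ?_ ?_ ?_
    · intro x hx
      simp only [mem_filter, mem_univ, true_and] at hx ⊢
      rw [fqDot_add_left, fqDot_smul_left, hw, hx]; ring
    · intro x hx
      simp only [mem_filter, mem_univ, true_and] at hx ⊢
      rw [fqDot_add_left, fqDot_smul_left, hw, hx]; ring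
    · intro x _; simp
    · intro x _; simp
  have h := card_eq_sum_card_fiberwise (s := (univ : Finset (Fin m → K)))
    (f := fun x => fqDot x z) (t := univ) (fun _ _ => by simp)
  rw [sum_congr rfl fun t _ => hfib t] at h
  simpa using h.symm

/-- The excess of collisions of `y ↦ x·y` on `G` over the expected number `|G|²/q`,
scaled by `q`. -/
def excess {m : ℕ} (G : Finset (Fin m → K)) (x : Fin m → K) : ℝ :=
  (Fintype.card K : ℝ) * (coll G (fqDot x) : ℝ) - (G.card : ℝ) ^ 2

lemma excess_nonneg {m : ℕ} (G : Finset (Fin m → K)) (x : Fin m → K) : 0 ≤ excess G x := by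
  have h := card_sq_le_mul_coll G (fqDot x) univ (fun _ _ => mem_univ _)
  rw [card_univ] at h
  unfold excess
  rw [sub_nonneg]
  exact_mod_cast h

lemma excess_smul {m : ℕ} (G : Finset (Fin m → K)) (x : Fin m → K) (s : K) (hs : s ≠ 0) :
    excess G (s • x) = excess G x := by
  unfold excess coll
  simp only [fqDot_smul_left, mul_right_inj' hs]

/-- Double counting: for fixed `y, y'`, the vectors `x` with `x·(y - y') = 0` number `q^m` if
`y = y'`, and `q^(m-1)` otherwise. -/
lemma sum_excess {m : ℕ} (G : Finset (Fin m → K)) :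
    ∑ x, excess G x
      = (Fintype.card K : ℝ) ^ m * ((Fintype.card K : ℝ) - 1) * (G.card : ℝ) := by
  have hswap : ∑ x : Fin m → K, coll G (fqDot x)
      = ∑ p ∈ G ×ˢ G, (univ.filter fun x : Fin m → K => fqDot x (p.1 - p.2) = 0).card := by
    simp only [coll, card_filter, fqDot_sub_right, sub_eq_zero]
    exact sum_comm
  have hpt : ∀ p ∈ G ×ˢ G, (Fintype.card K : ℝ) *
      ((univ.filter fun x : Fin m → K => fqDot x (p.1 - p.2) = 0).card : ℝ)
      = (Fintype.card K : ℝ) ^ m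
        + if p.1 = p.2 then (Fintype.card K : ℝ) ^ m * ((Fintype.card K : ℝ) - 1) else 0 := by
    intro p _
    split_ifs with h
    · simp [h, fqDot]; ring
    · rw [add_zero]
      exact_mod_cast card_orth (p.1 - p.2) (sub_ne_zero.mpr h)
  have hdiag : ((G ×ˢ G).filter fun p => p.1 = p.2).card = G.card := by
    rw [← diag_card G]
    congr 1
    ext p
    simp only [mem_filter, mem_product, mem_diag]
    grind
  have hsum : (Fintype.card K : ℝ) * ∑ x : Fin m → K, (coll G (fqDot x) : ℝ)
      = (G.card : ℝ) ^ 2 * (Fintype.card K : ℝ) ^ m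
        + G.card * ((Fintype.card K : ℝ) ^ m * ((Fintype.card K : ℝ) - 1)) := by
    rw [← Nat.cast_sum, hswap, Nat.cast_sum, mul_sum, sum_congr rfl hpt, sum_add_distrib,
      ← sum_filter, sum_const, sum_const, hdiag, card_product]
    simp only [nsmul_eq_mul]
    push_cast
    ring
  unfold excess
  rw [sum_sub_distrib, ← mul_sum, hsum]
  simp
  ring

/-- A line through the origin meets the paraboloid in at most one point with `x_d ≠ 0`, so the
`q - 1` nonzero dilates of `A` are disjoint and share the total excess of the whole space. -/
lemma sum_excess_parab {n : ℕ} (G A : Finset (Fin (n + 1) → K)) (hA : A ⊆ parab n)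
    (hne : ∀ x ∈ A, x (Fin.last n) ≠ 0) :
    ∑ x ∈ A, excess G x ≤ (Fintype.card K : ℝ) ^ (n + 1) * (G.card : ℝ) := by
  set S : Finset K := univ.filter fun s => s ≠ 0
  have hS : (S.card : ℝ) = (Fintype.card K : ℝ) - 1 := by
    have : S = univ.erase 0 := by ext; simp [S]
    rw [this, card_erase_of_mem (mem_univ _), card_univ,
      Nat.cast_sub Fintype.card_pos, Nat.cast_one]
  have hinj : Set.InjOn (fun p : K × (Fin (n + 1) → K) => p.1 • p.2) (S ×ˢ A : Finset _) := by
    rintro ⟨s, x⟩ h1 ⟨s', x'⟩ h2 h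
    simp only [coe_product, Set.mem_prod, mem_coe] at h1 h2
    have hs : s ≠ 0 := by simpa [S] using h1.1
    have hs' : s' ≠ 0 := by simpa [S] using h2.1
    have hx := hA h1.2
    have hx' := hA h2.2
    simp only [parab, mem_filter, mem_univ, true_and] at hx hx'
    have hco : ∀ i, s * x i = s' * x' i := fun i => congrFun h i
    have hsq : s ^ 2 * x (Fin.last n) = s' ^ 2 * x' (Fin.last n) := by
      rw [← hx, ← hx', mul_sum, mul_sum]
      refine sum_congr rfl fun i _ => ?_
      rw [← mul_pow, ← mul_pow, hco]
    have hlast := hco (Fin.last n)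
    have hss : s = s' := by
      have h3 : (s' * x' (Fin.last n)) * (s - s') = 0 := by
        linear_combination hsq - s * hlast
      rcases mul_eq_zero.mp h3 with h4 | h4
      · exact absurd h4 (mul_ne_zero hs' (hne _ h2.2))
      · exact sub_eq_zero.mp h4
    subst hss
    congr 1
    funext i
    exact mul_left_cancel₀ hs (hco i)
  have hle : ((Fintype.card K : ℝ) - 1) * ∑ x ∈ A, excess G x
      ≤ ((Fintype.card K : ℝ) - 1) * ((Fintype.card K : ℝ) ^ (n + 1) * (G.card : ℝ)) := by
    calc ((Fintype.card K : ℝ) - 1) * ∑ x ∈ A, excess G x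
        = ∑ p ∈ S ×ˢ A, excess G (p.1 • p.2) := by
          rw [sum_product, ← hS, ← nsmul_eq_mul, ← sum_const]
          refine sum_congr rfl fun s hs => sum_congr rfl fun x _ => ?_
          exact (excess_smul G x s (by simpa [S] using hs)).symm
      _ = ∑ x ∈ (S ×ˢ A).image (fun p => p.1 • p.2), excess G x :=
          (sum_image (f := excess G) hinj).symm
      _ ≤ ∑ x, excess G x :=
          sum_le_sum_of_subset_of_nonneg (subset_univ _) fun x _ _ => excess_nonneg G x
      _ = _ := by rw [sum_excess]; ring
  have hq : (1 : ℝ) < Fintype.card K := by exact_mod_cast Fintype.one_lt_card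
  exact le_of_mul_le_mul_left hle (by linarith)

/-- When `x_d = 0`, the product `x·y` only sees `π(y)`, so the excess is one in `K^n`. -/
lemma sum_excess_flat {n : ℕ} (G A : Finset (Fin (n + 1) → K))
    (hG : Set.InjOn (projFirst n) (G : Set (Fin (n + 1) → K)))
    (hz : ∀ x ∈ A, x (Fin.last n) = 0) :
    ∑ x ∈ A, excess G x ≤ (Fintype.card K : ℝ) ^ (n + 1) * (G.card : ℝ) := by
  have hcard : (G.image (projFirst n)).card = G.card := card_image_of_injOn hG
  have hdot : ∀ x ∈ A, ∀ y, fqDot x y = fqDot (projFirst n x) (projFirst n y) := by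
    intro x hx y
    simp [fqDot, Fin.sum_univ_castSucc, projFirst, hz x hx]
  have hex : ∀ x ∈ A, excess G x = excess (G.image (projFirst n)) (projFirst n x) := by
    intro x hx
    unfold excess
    rw [hcard]
    congr 3
    unfold coll
    refine card_bij (fun p _ => (projFirst n p.1, projFirst n p.2)) ?_ ?_ ?_
    · intro p hp
      simp only [mem_filter, mem_product, hdot x hx] at hp ⊢
      exact ⟨⟨mem_image_of_mem _ hp.1.1, mem_image_of_mem _ hp.1.2⟩, hp.2⟩
    · intro p hp p' hp' h
      simp only [mem_filter, mem_product] at hp hp'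
      simp only [Prod.mk.injEq] at h
      exact Prod.ext (hG hp.1.1 hp'.1.1 h.1) (hG hp.1.2 hp'.1.2 h.2)
    · rintro ⟨u, v⟩ huv
      simp only [mem_filter, mem_product, mem_image] at huv
      obtain ⟨⟨⟨y, hy, rfl⟩, ⟨y', hy', rfl⟩⟩, h⟩ := huv
      refine ⟨(y, y'), ?_, rfl⟩
      simp only [mem_filter, mem_product, hdot x hx]
      exact ⟨⟨hy, hy'⟩, h⟩
  have hinj : Set.InjOn (projFirst n) (A : Set (Fin (n + 1) → K)) := by
    intro x hx x' hx' h
    funext i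
    refine Fin.lastCases ?_ (fun j => congrFun h j) i
    rw [hz x hx, hz x' hx']
  rw [sum_congr rfl hex, ← sum_image (f := excess (G.image (projFirst n))) hinj]
  calc _ ≤ ∑ x, excess (G.image (projFirst n)) x :=
        sum_le_sum_of_subset_of_nonneg (subset_univ _) fun x _ _ => excess_nonneg _ x
    _ ≤ _ := by
        rw [sum_excess, hcard, pow_succ]
        gcongr
        linarith

end

/-- d = n+1 ≥ 3: if E ⊆ P, |π(F)| ≥ c₀ q^{-γ}|F| and |E||F| ≥ C q^{d+γ},
then |Π(E,F)| ≥ cq. -/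
theorem dotSet_card_parab_proj_lower (n : ℕ) (hd : 3 ≤ n + 1) (c₀ : ℝ) (hc₀ : 0 < c₀) :
    ∃ C : ℝ, 1 < C ∧ ∃ c : ℝ, 0 < c ∧ c < 1 ∧
      ∀ γ : ℝ, 0 ≤ γ → γ ≤ 1 →
      ∀ (K : Type) [Field K] [Fintype K] [DecidableEq K],
        Odd (Fintype.card K) →
        ∀ E F : Finset (Fin (n + 1) → K), E ⊆ parab n →
          (((F.image (projFirst n)).card : ℝ) ≥
            c₀ * (Fintype.card K : ℝ) ^ (-γ) * (F.card : ℝ)) →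
          ((E.card : ℝ) * (F.card : ℝ) ≥
            C * (Fintype.card K : ℝ) ^ (((n : ℝ) + 1) + γ)) →
          ((dotSet E F).card : ℝ) ≥ c * (Fintype.card K : ℝ) := by
  -- `C = 2 + 2 / c₀` exceeds `1` and satisfies `c₀ * C ≥ 2`.
  refine ⟨2 + 2 / c₀, by have := div_pos two_pos hc₀; linarith, 1 / 2, by norm_num, by norm_num, ?_⟩
  intro γ _ _ K _ _ _ _ E F hE hF hEF
  have hq : (0 : ℝ) < Fintype.card K := by exact_mod_cast Fintype.card_pos
  obtain ⟨G, hGF, hGimg, hGinj⟩ : ∃ G ⊆ F, G.image (projFirst n) = F.image (projFirst n) ∧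
      Set.InjOn (projFirst n) (G : Set (Fin (n + 1) → K)) := by
    obtain ⟨G, hG, hGi, hGe⟩ := exists_subset_injOn_image_eq_of_surjOn (f := projFirst n) F
      (F.image (projFirst n)) (by rw [coe_image]; exact Set.surjOn_image _ _)
    exact ⟨G, hG, hGe, hGi⟩
  have hcard : (F.image (projFirst n)).card = G.card := by
    rw [← hGimg, card_image_of_injOn hGinj]
  rw [hcard] at hF
  set q : ℝ := (Fintype.card K : ℝ)
  set P : ℝ := ((dotSet E F).card : ℝ)
  set e : ℝ := (E.card : ℝ)
  set g : ℝ := (G.card : ℝ)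
  have he : 0 ≤ e := Nat.cast_nonneg _
  have hg : 0 ≤ g := Nat.cast_nonneg _
  have hQ : 0 < q ^ (n + 1) := pow_pos hq _
  have hbig : 2 * q ^ (n + 1) ≤ e * g := by
    have hpow : q ^ (-γ) * q ^ (((n : ℝ) + 1) + γ) = q ^ (n + 1) := by
      rw [← Real.rpow_add hq, ← Real.rpow_natCast]
      congr 1
      push_cast
      ring
    calc 2 * q ^ (n + 1) ≤ (c₀ * (2 + 2 / c₀)) * q ^ (n + 1) := by
          gcongr
          rw [mul_add, mul_div_cancel₀ _ hc₀.ne']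
          linarith
      _ = c₀ * q ^ (-γ) * ((2 + 2 / c₀) * q ^ (((n : ℝ) + 1) + γ)) := by rw [← hpow]; ring
      _ ≤ c₀ * q ^ (-γ) * (e * F.card) := by gcongr
      _ = e * (c₀ * q ^ (-γ) * F.card) := by ring
      _ ≤ e * g := by gcongr
  have hex : ∑ x ∈ E, excess G x ≤ 2 * q ^ (n + 1) * g := by
    rw [← sum_filter_add_sum_filter_not E (fun x => x (Fin.last n) ≠ 0)]
    have h1 := sum_excess_parab G (E.filter fun x => x (Fin.last n) ≠ 0)
      ((filter_subset _ _).trans hE) (fun x hx => (mem_filter.mp hx).2)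
    have h2 := sum_excess_flat G (E.filter fun x => ¬ x (Fin.last n) ≠ 0) hGinj
      (fun x hx => not_not.mp (mem_filter.mp hx).2)
    linarith
  have hCS : ∀ x ∈ E, q * g ^ 2 ≤ P * (excess G x + g ^ 2) := by
    intro x hx
    have h := card_sq_le_mul_coll G (fqDot x) (dotSet E F) (fun y hy =>
      mem_image.mpr ⟨(x, y), mem_product.mpr ⟨hx, hGF hy⟩, rfl⟩)
    have h' : g ^ 2 ≤ P * (coll G (fqDot x) : ℝ) := by
      simp only [g, P]
      exact_mod_cast h
    have h3 : excess G x + g ^ 2 = q * (coll G (fqDot x) : ℝ) := sub_add_cancel _ _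
    rw [h3]
    nlinarith
  have hsum := sum_le_sum hCS
  rw [sum_const, nsmul_eq_mul, ← mul_sum, sum_add_distrib, sum_const, nsmul_eq_mul] at hsum
  have hP : 0 ≤ P := Nat.cast_nonneg _
  have hfin : (e * g ^ 2) * q ≤ (e * g ^ 2) * (2 * P) := by
    calc (e * g ^ 2) * q = e * (q * g ^ 2) := by ring
      _ ≤ P * (∑ x ∈ E, excess G x + e * g ^ 2) := hsum
      _ ≤ P * ((e * g) * g + e * g ^ 2) := by
          gcongr
          exact hex.trans (by gcongr)
      _ = (e * g ^ 2) * (2 * P) := by ring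
  have heg : 0 < e * g := by linarith
  have hg0 : 0 < g := pos_of_mul_pos_right heg he
  have : 0 < e * g ^ 2 := by
    have := mul_pos heg hg0
    nlinarith
  have := le_of_mul_le_mul_left hfin this
  show 1 / 2 * q ≤ P
  linarith
end
end
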